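/- Let m, n_1, ..., n_m be positive integers and p_1, ..., p_m ∈ [1, ∞]. There exists a constant C > 0 depending only on m such that there is a choice of signs ε_{j_1,...,j_m} ∈ {−1, 1} for which the m-linear form A : ℓ_{p_1}^{n_1} × ⋯ × ℓ_{p_m}^{n_m} → 𝕂 defined by A(z^{(1)}, ..., z^{(m)}) = Σ_{j_1=1}^{n_1} ⋯ Σ_{j_m=1}^{n_m} ε_{j_1,...,j_m} z_{j_1}^{(1)} ⋯ z_{j_m}^{(m)} satisfies ‖A‖ ≤ C · (Σ_{k=1}^m n_k)^{1 − 1/γ} · Π_{k=1}^m n_k^{max{1/γ − 1/p_k, 0}}, where γ := min{2, max{p_k : p_k ≤ 2}} (with γ := 2 if no p_k ≤ 2). -/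

import Mathlib

open scoped BigOperators ENNReal

noncomputable section

/-- The `ℓ_p` norm on `𝕂^n`, for `p ∈ [1, ∞]` (sup norm when `p = ∞`). -/
def lpNorm {𝕂 : Type*} [RCLike 𝕂] (p : ℝ≥0∞) {n : ℕ} (x : Fin n → 𝕂) : ℝ :=
  if p = ∞ then ⨆ j, ‖x j‖ else (∑ j, ‖x j‖ ^ p.toReal) ^ (1 / p.toReal)

/-- The operator norm of an `m`-linear form `A : ℓ_{p 1}^{n 1} × ⋯ × ℓ_{p m}^{n m} → 𝕂`,
i.e. the supremum of `‖A x‖` over all `x` with `‖x k‖_{p k} ≤ 1` for every `k`. -/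
def opNorm {𝕂 : Type*} [RCLike 𝕂] {m : ℕ} {n : Fin m → ℕ} (p : Fin m → ℝ≥0∞)
    (A : MultilinearMap 𝕂 (fun k => Fin (n k) → 𝕂) 𝕂) : ℝ :=
  sSup {t | ∃ x : ∀ k, Fin (n k) → 𝕂, (∀ k, lpNorm (p k) (x k) ≤ 1) ∧ t = ‖A x‖}

/-- A multilinear form is unimodular if all its coefficients `A (e_{j 1}, …, e_{j m})`
have modulus 1. -/
def Unimodular {𝕂 : Type*} [RCLike 𝕂] {m : ℕ} {n : Fin m → ℕ}
    (A : MultilinearMap 𝕂 (fun k => Fin (n k) → 𝕂) 𝕂) : Prop :=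
  ∀ j : ∀ k, Fin (n k), ‖A (fun k => Pi.single (j k) 1)‖ = 1

/-- The `m`-linear form `z ↦ ∑_j c j • z^{(1)}_{j 1} ⋯ z^{(m)}_{j m}` determined by the
coefficients `c`. -/
def coeffForm {𝕂 : Type*} [RCLike 𝕂] {m : ℕ} {n : Fin m → ℕ} (c : (∀ k, Fin (n k)) → 𝕂) :
    MultilinearMap 𝕂 (fun k => Fin (n k) → 𝕂) 𝕂 :=
  ∑ j : ∀ k, Fin (n k), (MultilinearMap.mkPiRing 𝕂 (Fin m) (c j)).compLinearMap
    fun k => LinearMap.proj (j k)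

/-- The conjugate exponent `p*` of `p ∈ [1,∞]`, defined by `1/p + 1/p* = 1`. -/
def conjExp (p : ℝ≥0∞) : ℝ≥0∞ := (1 - 1/p)⁻¹

/-!
For `1 ≤ γ ≤ 2` one has `cosh u ≤ exp (|u| ^ γ)`, so a random sign sum whose coefficients lie in
the unit ball of `ℓ_γ` has Laplace transform at `t` at most `exp (t ^ γ)`. Put `N = ∑ n_k`. The
unit ball of `ℓ_γ^{n_k}` has a `1/2`-net of at most `25 ^ n_k` points, so the product of these
nets has at most `25 ^ N` points; a union bound over it with `t = N ^ (1 / γ)` gives signs for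
which the form is at most a constant times `N ^ (1 - 1 / γ)` on the nets. Passing from the nets to
the full balls costs a factor `2` per variable, and passing from `ℓ_γ^{n_k}` to `ℓ_{p_k}^{n_k}`
costs the norm `n_k ^ max (1 / γ - 1 / p_k) 0` of the inclusion.
-/

open scoped NNReal
open Metric (IsCover IsSeparated closedBall coveringNumber packingNumber)

section Nets

variable {E : Type*} [NormedAddCommGroup E] [NormedSpace ℝ E] [FiniteDimensional ℝ E]

lemma card_le_of_isSeparated_half {s : Finset E} (hs : ∀ x ∈ s, ‖x‖ ≤ 1)
    (hsep : IsSeparated (1 / 2 : ℝ≥0) (s : Set E)) : s.card ≤ 5 ^ Module.finrank ℝ E := by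
  classical
  have hinj : Function.Injective fun x : E => (2 : ℝ) • x := smul_right_injective E two_ne_zero
  rw [← Finset.card_image_of_injective s hinj]
  refine Besicovitch.card_le_of_separated _ ?_ ?_
  · rintro _ hx
    obtain ⟨x, hxs, rfl⟩ := Finset.mem_image.1 hx
    rw [norm_smul, Real.norm_two]
    linarith [hs x hxs]
  · rintro _ hx _ hy hxy
    obtain ⟨x, hxs, rfl⟩ := Finset.mem_image.1 hx
    obtain ⟨y, hys, rfl⟩ := Finset.mem_image.1 hy
    have hdist : (1 / 2 : ℝ) < ‖x - y‖ := by
      have h : ((1 / 2 : ℝ≥0) : ℝ≥0∞) < edist x y := hsep hxs hys (ne_of_apply_ne _ hxy)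
      rw [edist_nndist, ENNReal.coe_lt_coe, ← NNReal.coe_lt_coe, coe_nndist, dist_eq_norm] at h
      simpa using h
    rw [← smul_sub, norm_smul, Real.norm_two]
    linarith

lemma packingNumber_half_closedBall_le :
    packingNumber (1 / 2) (closedBall (0 : E) 1) ≤ (5 ^ Module.finrank ℝ E : ℕ) := by
  refine iSup₂_le fun C hC => iSup_le fun hsep => ?_
  by_contra! hcard
  obtain ⟨t, htC, ht⟩ := Set.exists_subset_encard_eq (Order.add_one_le_of_lt hcard)
  have htfin : t.Finite := Set.finite_of_encard_eq_coe (k := 5 ^ Module.finrank ℝ E + 1) ht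
  lift t to Finset E using htfin
  rw [Set.encard_coe_eq_coe_finsetCard] at ht
  have hle := card_le_of_isSeparated_half
    (fun x hx => mem_closedBall_zero_iff.1 (hC (htC hx))) (hsep.subset htC)
  have : t.card = 5 ^ Module.finrank ℝ E + 1 := by exact_mod_cast ht
  omega

variable (E) in
lemma exists_finset_isCover_half_closedBall :
    ∃ S : Finset E, (∀ x ∈ S, ‖x‖ ≤ 1) ∧ S.card ≤ 5 ^ Module.finrank ℝ E ∧
      IsCover (1 / 2) (closedBall (0 : E) 1) (S : Set E) := by
  have hcov : coveringNumber (1 / 2) (closedBall (0 : E) 1) ≤ (5 ^ Module.finrank ℝ E : ℕ) :=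
    (Metric.coveringNumber_le_packingNumber _ _).trans packingNumber_half_closedBall_le
  obtain ⟨S, hSball, hSfin, hScover, hScard⟩ :=
    Metric.exists_set_encard_eq_coveringNumber (ne_top_of_le_ne_top (ENat.natCast_ne_top _) hcov)
  lift S to Finset E using hSfin
  refine ⟨S, fun x hx => mem_closedBall_zero_iff.1 (hSball hx), ?_, hScover⟩
  rw [← hScard, Set.encard_coe_eq_coe_finsetCard] at hcov
  exact_mod_cast hcov

end Nets

section BoundsOnNets

variable {𝕜 : Type*} [RCLike 𝕜] {F : Type*} [NormedAddCommGroup F] [NormedSpace 𝕜 F] {δ : ℝ≥0}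

lemma opNorm_le_of_isCover_closedBall {E : Type*} [NormedAddCommGroup E] [NormedSpace 𝕜 E]
    {S : Set E} (hδ : δ < 1) (hS : IsCover δ (closedBall (0 : E) 1) S) (L : E →L[𝕜] F) {M : ℝ}
    (hM : ∀ s ∈ S, ‖L s‖ ≤ M) : ‖L‖ ≤ (1 - δ : ℝ)⁻¹ * M := by
  have hcover := Metric.isCover_iff_subset_iUnion_closedBall.1 hS
  have hball : ∀ x : E, ‖x‖ ≤ 1 → ‖L x‖ ≤ M + ‖L‖ * δ := by
    intro x hx
    obtain ⟨s, hs, hxs⟩ := Set.mem_iUnion₂.1 (hcover (mem_closedBall_zero_iff.2 hx))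
    calc ‖L x‖ = ‖L s + L (x - s)‖ := by rw [← map_add, add_sub_cancel]
      _ ≤ ‖L s‖ + ‖L (x - s)‖ := norm_add_le _ _
      _ ≤ M + ‖L‖ * δ :=
        add_le_add (hM s hs) (L.le_opNorm_of_le (mem_closedBall_iff_norm.1 hxs))
  have hself : ‖L‖ ≤ M + ‖L‖ * δ :=
    ContinuousLinearMap.opNorm_le_of_unit_norm
      ((norm_nonneg _).trans (hball 0 (by simp))) fun x hx => hball x hx.le
  rw [← div_eq_inv_mul, le_div_iff₀ (sub_pos.2 (by exact_mod_cast hδ))]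
  linarith

-- Free the coordinates from their nets one at a time; each one costs a factor `(1 - δ)⁻¹`.
lemma norm_multilinear_le_of_isCover_closedBall {ι : Type*} [Fintype ι] {E : ι → Type*}
    [∀ k, NormedAddCommGroup (E k)] [∀ k, NormedSpace 𝕜 (E k)] {S : ∀ k, Set (E k)} (hδ : δ < 1)
    (hS : ∀ k, IsCover δ (closedBall (0 : E k) 1) (S k)) (f : ContinuousMultilinearMap 𝕜 E F)
    {M : ℝ} (hM : ∀ x, (∀ k, x k ∈ S k) → ‖f x‖ ≤ M) (x : ∀ k, E k) :
    ‖f x‖ ≤ (1 - δ : ℝ)⁻¹ ^ Fintype.card ι * M * ∏ k, ‖x k‖ := by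
  classical
  suffices key : ∀ (t : Finset ι) (x : ∀ k, E k), (∀ k ∉ t, x k ∈ S k) →
      ‖f x‖ ≤ (1 - δ : ℝ)⁻¹ ^ t.card * M * ∏ k ∈ t, ‖x k‖ from
    key Finset.univ x fun k hk => absurd (Finset.mem_univ k) hk
  intro t
  induction t using Finset.induction_on with
  | empty => simpa using hM
  | insert a t ha ih =>
    intro x hx
    have hslice : ∀ s ∈ S a, ‖f.toContinuousLinearMap x a s‖ ≤
        (1 - δ : ℝ)⁻¹ ^ t.card * M * ∏ k ∈ t, ‖x k‖ := by
      intro s hs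
      have hprod : ∏ k ∈ t, ‖Function.update x a s k‖ = ∏ k ∈ t, ‖x k‖ :=
        Finset.prod_congr rfl fun k hk => by
          rw [Function.update_of_ne (ne_of_mem_of_not_mem hk ha)]
      refine (ih (Function.update x a s) fun k hk => ?_).trans_eq (by rw [hprod])
      rcases eq_or_ne k a with rfl | hka
      · simpa using hs
      · simpa [hka] using hx k (by simp [hka, hk])
    calc ‖f x‖ = ‖f.toContinuousLinearMap x a (x a)‖ := by simp
      _ ≤ (1 - δ : ℝ)⁻¹ * ((1 - δ : ℝ)⁻¹ ^ t.card * M * ∏ k ∈ t, ‖x k‖) * ‖x a‖ :=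
        ContinuousLinearMap.le_of_opNorm_le _
          (opNorm_le_of_isCover_closedBall hδ (hS a) _ hslice) _
      _ = (1 - δ : ℝ)⁻¹ ^ (insert a t).card * M * ∏ k ∈ insert a t, ‖x k‖ := by
        rw [Finset.card_insert_of_notMem ha, Finset.prod_insert ha]
        ring

end BoundsOnNets

section RandomSigns

lemma cosh_le_exp_abs_rpow {γ : ℝ} (hγ₁ : 1 ≤ γ) (hγ₂ : γ ≤ 2) (u : ℝ) :
    Real.cosh u ≤ Real.exp (|u| ^ γ) := by
  rcases le_total |u| 1 with hu | hu
  · refine (Real.cosh_le_exp_half_sq u).trans (Real.exp_le_exp.2 ?_)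
    have hpow : |u| ^ (2 : ℝ) ≤ |u| ^ γ :=
      Real.rpow_le_rpow_of_exponent_ge_of_imp (abs_nonneg u) hu hγ₂ (by intros; linarith)
    rw [Real.rpow_two, sq_abs] at hpow
    linarith [sq_nonneg u]
  · calc Real.cosh u = (Real.exp |u| + Real.exp (-|u|)) / 2 := by
          rw [← Real.cosh_abs, Real.cosh_eq]
      _ ≤ Real.exp |u| := by
        have : Real.exp (-|u|) ≤ Real.exp |u| := Real.exp_le_exp.2 (by linarith)
        linarith
      _ ≤ Real.exp (|u| ^ γ) := Real.exp_le_exp.2 (Real.self_le_rpow_of_one_le hu hγ₁)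

variable {J : Type*} [Fintype J]

lemma sum_signs_exp_sum_mul [DecidableEq J] (a : J → ℝ) :
    ∑ e : J → ℤˣ, Real.exp (∑ j, ((e j : ℤ) : ℝ) * a j) =
      2 ^ Fintype.card J * ∏ j, Real.cosh (a j) := by
  have htwo : ∀ j, ∑ u : ℤˣ, Real.exp (((u : ℤ) : ℝ) * a j) = 2 * Real.cosh (a j) := by
    intro j
    rw [UnitsInt.univ, Finset.sum_pair (by decide), Real.cosh_eq]
    simp only [Units.val_one, Units.val_neg, Int.cast_one, Int.cast_neg, one_mul, neg_one_mul]
    ring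
  calc ∑ e : J → ℤˣ, Real.exp (∑ j, ((e j : ℤ) : ℝ) * a j)
      = ∑ e : J → ℤˣ, ∏ j, Real.exp (((e j : ℤ) : ℝ) * a j) := by simp only [Real.exp_sum]
    _ = ∏ j, 2 * Real.cosh (a j) := by
      rw [← Fintype.prod_sum fun j (u : ℤˣ) => Real.exp (((u : ℤ) : ℝ) * a j)]
      simp only [htwo]
    _ = 2 ^ Fintype.card J * ∏ j, Real.cosh (a j) := by
      rw [Finset.prod_mul_distrib, Finset.prod_const, Finset.card_univ]

lemma sum_signs_cosh_sum_mul [DecidableEq J] (a : J → ℝ) :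
    ∑ e : J → ℤˣ, Real.cosh (∑ j, ((e j : ℤ) : ℝ) * a j) =
      2 ^ Fintype.card J * ∏ j, Real.cosh (a j) := by
  have hneg := sum_signs_exp_sum_mul (-a)
  simp only [Pi.neg_apply, mul_neg, Finset.sum_neg_distrib, Real.cosh_neg] at hneg
  simp only [Real.cosh_eq (∑ _, _), ← Finset.sum_div, Finset.sum_add_distrib,
    sum_signs_exp_sum_mul, hneg]
  ring

lemma sum_signs_cosh_sum_mul_le [DecidableEq J] {γ : ℝ} (hγ₁ : 1 ≤ γ) (hγ₂ : γ ≤ 2)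
    (a : J → ℝ) :
    ∑ e : J → ℤˣ, Real.cosh (∑ j, ((e j : ℤ) : ℝ) * a j) ≤
      2 ^ Fintype.card J * Real.exp (∑ j, |a j| ^ γ) := by
  rw [sum_signs_cosh_sum_mul, Real.exp_sum]
  gcongr
  exact cosh_le_exp_abs_rpow hγ₁ hγ₂ _

lemma exists_signs_forall_abs_sum_le {ι : Type*} [Fintype ι] {γ : ℝ} (hγ₁ : 1 ≤ γ) (hγ₂ : γ ≤ 2)
    (a : ι → J → ℝ) (ha : ∀ i, ∑ j, |a i j| ^ γ ≤ 1) {t : ℝ} (ht : 0 < t) :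
    ∃ e : J → ℤˣ, ∀ i, |∑ j, ((e j : ℤ) : ℝ) * a i j| ≤
      (Real.log (2 * Fintype.card ι) + t ^ γ) / t := by
  classical
  have hmean : ∀ i, ∑ e : J → ℤˣ, Real.cosh (∑ j, ((e j : ℤ) : ℝ) * (t * a i j)) ≤
      2 ^ Fintype.card J * Real.exp (t ^ γ) := by
    intro i
    refine (sum_signs_cosh_sum_mul_le hγ₁ hγ₂ _).trans ?_
    simp only [abs_mul, abs_of_pos ht, Real.mul_rpow ht.le (abs_nonneg _), ← Finset.mul_sum]
    gcongr
    exact mul_le_of_le_one_right (by positivity) (ha i)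
  obtain ⟨e, -, he⟩ : ∃ e ∈ (Finset.univ : Finset (J → ℤˣ)),
      ∑ i, Real.cosh (∑ j, ((e j : ℤ) : ℝ) * (t * a i j)) ≤
        Fintype.card ι * Real.exp (t ^ γ) := by
    refine Finset.exists_le_of_sum_le Finset.univ_nonempty ?_
    rw [Finset.sum_comm]
    refine (Finset.sum_le_sum fun i _ => hmean i).trans_eq ?_
    simp [mul_left_comm]
  refine ⟨e, fun i => ?_⟩
  have hcosh : Real.cosh (t * ∑ j, ((e j : ℤ) : ℝ) * a i j) ≤
      Fintype.card ι * Real.exp (t ^ γ) := by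
    simp only [Finset.mul_sum, mul_left_comm t]
    exact (Finset.single_le_sum (f := fun i => Real.cosh (∑ j, ((e j : ℤ) : ℝ) * (t * a i j)))
      (fun i _ => (Real.cosh_pos _).le) (Finset.mem_univ i)).trans he
  have hcard : (0 : ℝ) < Fintype.card ι := by exact_mod_cast Fintype.card_pos_iff.2 ⟨i⟩
  rw [le_div_iff₀' ht, ← Real.exp_le_exp, Real.exp_add, Real.exp_log (by positivity),
    ← abs_of_pos ht, ← abs_mul, abs_of_pos ht]
  refine (Real.exp_abs_le _).trans ?_
  rw [Real.cosh_eq] at hcosh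
  linarith

lemma norm_le_abs_re_add_abs_im {𝕂 : Type*} [RCLike 𝕂] (z : 𝕂) :
    ‖z‖ ≤ |RCLike.re z| + |RCLike.im z| := by
  refine le_of_sq_le_sq ?_ (by positivity)
  rw [RCLike.norm_sq_eq_def, add_sq, sq_abs, sq_abs]
  have : 0 ≤ |RCLike.re z| * |RCLike.im z| := by positivity
  linarith

lemma exists_signs_forall_norm_sum_le {𝕂 : Type*} [RCLike 𝕂] {ι : Type*} [Fintype ι] {γ : ℝ}
    (hγ₁ : 1 ≤ γ) (hγ₂ : γ ≤ 2) (a : ι → J → 𝕂) (ha : ∀ i, ∑ j, ‖a i j‖ ^ γ ≤ 1)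
    {t : ℝ} (ht : 0 < t) :
    ∃ e : J → ℤˣ, ∀ i, ‖∑ j, ((e j : ℤ) : 𝕂) * a i j‖ ≤
      2 * ((Real.log (4 * Fintype.card ι) + t ^ γ) / t) := by
  let reIm : ι ⊕ ι → J → ℝ :=
    Sum.elim (fun i j => RCLike.re (a i j)) (fun i j => RCLike.im (a i j))
  have hreIm : ∀ i, ∑ j, |reIm i j| ^ γ ≤ 1 := by
    rintro (i | i)
    · refine (Finset.sum_le_sum fun j _ => ?_).trans (ha i)
      exact Real.rpow_le_rpow (abs_nonneg _) (RCLike.abs_re_le_norm _) (by linarith)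
    · refine (Finset.sum_le_sum fun j _ => ?_).trans (ha i)
      exact Real.rpow_le_rpow (abs_nonneg _) (RCLike.abs_im_le_norm _) (by linarith)
  obtain ⟨e, he⟩ := exists_signs_forall_abs_sum_le hγ₁ hγ₂ reIm hreIm ht
  have hcard : (2 * Fintype.card (ι ⊕ ι) : ℝ) = 4 * Fintype.card ι := by
    rw [Fintype.card_sum]
    push_cast
    ring
  rw [hcard] at he
  refine ⟨e, fun i => ?_⟩
  have hre : RCLike.re (∑ j, ((e j : ℤ) : 𝕂) * a i j) =
      ∑ j, ((e j : ℤ) : ℝ) * reIm (.inl i) j := by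
    simp [reIm]
  have him : RCLike.im (∑ j, ((e j : ℤ) : 𝕂) * a i j) =
      ∑ j, ((e j : ℤ) : ℝ) * reIm (.inr i) j := by
    simp [reIm]
  refine (norm_le_abs_re_add_abs_im _).trans ?_
  rw [hre, him]
  linarith [he (.inl i), he (.inr i)]

end RandomSigns

section LpComparison

variable {ι : Type*} [Fintype ι] {β : ι → Type*} [∀ i, SeminormedAddCommGroup (β i)]

lemma one_le_toReal {p : ℝ≥0∞} (hp : 1 ≤ p) (hp' : p ≠ ∞) : 1 ≤ p.toReal := by
  simpa using ENNReal.toReal_mono hp' hp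

variable {p q : ℝ≥0∞} [Fact (1 ≤ p)] [Fact (1 ≤ q)]

lemma sum_norm_rpow_eq_norm_toLp_rpow (hp : p ≠ ∞) (x : ∀ i, β i) :
    ∑ i, ‖x i‖ ^ p.toReal = ‖WithLp.toLp p x‖ ^ p.toReal := by
  have hp₀ : 0 < p.toReal := one_pos.trans_le (one_le_toReal Fact.out hp)
  rw [PiLp.norm_eq_sum hp₀, ← Real.rpow_mul (by positivity), one_div_mul_cancel hp₀.ne',
    Real.rpow_one]

lemma norm_toLp_le_of_le (hpq : p ≤ q) (x : ∀ i, β i) :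
    ‖WithLp.toLp q x‖ ≤ ‖WithLp.toLp p x‖ := by
  have hcoord : ∀ i, ‖x i‖ ≤ ‖WithLp.toLp p x‖ := PiLp.norm_apply_le (WithLp.toLp p x)
  rcases eq_or_ne q ∞ with rfl | hq
  · rw [PiLp.norm_eq_ciSup]
    exact Real.iSup_le hcoord (norm_nonneg _)
  have hp : p ≠ ∞ := ne_top_of_le_ne_top hq hpq
  have hp₀ : 0 < p.toReal := one_pos.trans_le (one_le_toReal Fact.out hp)
  have hpq' : p.toReal ≤ q.toReal := ENNReal.toReal_mono hq hpq
  rw [← Real.rpow_le_rpow_iff (norm_nonneg _) (norm_nonneg _) (hp₀.trans_le hpq')]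
  have hsplit : ∀ y : ℝ, 0 ≤ y → y ^ q.toReal = y ^ p.toReal * y ^ (q.toReal - p.toReal) := by
    intro y hy
    rw [← Real.rpow_add_of_nonneg hy hp₀.le (sub_nonneg.2 hpq'), add_sub_cancel]
  calc ‖WithLp.toLp q x‖ ^ q.toReal
      = ∑ i, ‖x i‖ ^ p.toReal * ‖x i‖ ^ (q.toReal - p.toReal) := by
        simp only [← sum_norm_rpow_eq_norm_toLp_rpow hq, ← hsplit _ (norm_nonneg _)]
    _ ≤ ∑ i, ‖x i‖ ^ p.toReal * ‖WithLp.toLp p x‖ ^ (q.toReal - p.toReal) := by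
        gcongr with i
        exact hcoord i
    _ = ‖WithLp.toLp p x‖ ^ q.toReal := by
        rw [← Finset.sum_mul, sum_norm_rpow_eq_norm_toLp_rpow hp, ← hsplit _ (norm_nonneg _)]

lemma norm_toLp_le_card_rpow_mul_norm_toLp_top (hq : q ≠ ∞) (x : ∀ i, β i) :
    ‖WithLp.toLp q x‖ ≤ (Fintype.card ι : ℝ) ^ (1 / q).toReal * ‖WithLp.toLp ∞ x‖ := by
  have hq₀ : 0 < q.toReal := one_pos.trans_le (one_le_toReal Fact.out hq)
  have hcoord : ∀ i, ‖x i‖ ≤ ‖WithLp.toLp ∞ x‖ := PiLp.norm_apply_le (WithLp.toLp ∞ x)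
  rw [← Real.rpow_le_rpow_iff (norm_nonneg _) (by positivity) hq₀]
  calc ‖WithLp.toLp q x‖ ^ q.toReal = ∑ i, ‖x i‖ ^ q.toReal :=
        (sum_norm_rpow_eq_norm_toLp_rpow hq x).symm
    _ ≤ ∑ _i : ι, ‖WithLp.toLp ∞ x‖ ^ q.toReal := by
        gcongr with i
        exact hcoord i
    _ = ((Fintype.card ι : ℝ) ^ (1 / q).toReal * ‖WithLp.toLp ∞ x‖) ^ q.toReal := by
        rw [Real.mul_rpow (by positivity) (norm_nonneg _), ← Real.rpow_mul (by positivity),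
          one_div, ENNReal.toReal_inv, inv_mul_cancel₀ hq₀.ne', Real.rpow_one, Finset.sum_const,
          Finset.card_univ, nsmul_eq_mul]

lemma norm_toLp_le_card_rpow_mul_norm_toLp_of_le (hqp : q ≤ p) (x : ∀ i, β i) :
    ‖WithLp.toLp q x‖ ≤
      (Fintype.card ι : ℝ) ^ ((1 / q).toReal - (1 / p).toReal) * ‖WithLp.toLp p x‖ := by
  rcases eq_or_ne q ∞ with rfl | hq
  · obtain rfl : p = ∞ := top_le_iff.1 hqp
    simp
  rcases eq_or_ne p ∞ with rfl | hp
  · simpa using norm_toLp_le_card_rpow_mul_norm_toLp_top hq x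
  have hq₀ : 0 < q.toReal := one_pos.trans_le (one_le_toReal Fact.out hq)
  have hqp' : q.toReal ≤ p.toReal := ENNReal.toReal_mono hp hqp
  have hp₀ : 0 < p.toReal := hq₀.trans_le hqp'
  have hpowerMean := Real.rpow_sum_le_const_mul_sum_rpow_of_nonneg Finset.univ
    (f := fun i => ‖x i‖ ^ q.toReal) ((one_le_div₀ hq₀).2 hqp') fun i _ => by positivity
  simp only [← Real.rpow_mul (norm_nonneg _), mul_div_cancel₀ _ hq₀.ne', Finset.card_univ,
    sum_norm_rpow_eq_norm_toLp_rpow hq, sum_norm_rpow_eq_norm_toLp_rpow hp] at hpowerMean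
  rw [← Real.rpow_le_rpow_iff (norm_nonneg _) (by positivity) hp₀,
    Real.mul_rpow (by positivity) (norm_nonneg _), ← Real.rpow_mul (by positivity)]
  convert hpowerMean using 3
  simp only [one_div, ENNReal.toReal_inv]
  field_simp

lemma norm_toLp_le_card_rpow_mul_norm_toLp (x : ∀ i, β i) :
    ‖WithLp.toLp q x‖ ≤
      (Fintype.card ι : ℝ) ^ max ((1 / q).toReal - (1 / p).toReal) 0 * ‖WithLp.toLp p x‖ := by
  have hinv_le : ∀ {r s : ℝ≥0∞}, 1 ≤ r → r ≤ s → (1 / s).toReal ≤ (1 / r).toReal :=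
    fun hr hrs => ENNReal.toReal_mono (by simp [(one_pos.trans_le hr).ne'])
      (ENNReal.div_le_div_left hrs 1)
  rcases le_total p q with hpq | hqp
  · rw [max_eq_right (sub_nonpos.2 (hinv_le Fact.out hpq)), Real.rpow_zero, one_mul]
    exact norm_toLp_le_of_le hpq x
  · rw [max_eq_left (sub_nonneg.2 (hinv_le Fact.out hqp))]
    exact norm_toLp_le_card_rpow_mul_norm_toLp_of_le hqp x

end LpComparison

lemma lpNorm_eq_norm_toLp {𝕂 : Type*} [RCLike 𝕂] {n : ℕ} (p : ℝ≥0∞) [Fact (1 ≤ p)]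
    (x : Fin n → 𝕂) : lpNorm p x = ‖WithLp.toLp p x‖ := by
  rcases eq_or_ne p ∞ with rfl | hp
  · rw [lpNorm, if_pos rfl, PiLp.norm_eq_ciSup]
  · rw [lpNorm, if_neg hp, PiLp.norm_eq_sum (one_pos.trans_le (one_le_toReal Fact.out hp))]

lemma coeffForm_apply {𝕂 : Type*} [RCLike 𝕂] {m : ℕ} {n : Fin m → ℕ} (c : (∀ k, Fin (n k)) → 𝕂)
    (x : ∀ k, Fin (n k) → 𝕂) : coeffForm c x = ∑ j, c j * ∏ k, x k (j k) := by
  simp [coeffForm, mul_comm]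

section KahaneSalemZygmund

variable {𝕂 : Type*} [RCLike 𝕂] {m : ℕ} {n : Fin m → ℕ}

variable (𝕂) in
lemma finrank_real_piLp_le (γ : ℝ≥0∞) (n : ℕ) :
    Module.finrank ℝ (PiLp γ fun _ : Fin n => 𝕂) ≤ 2 * n := by
  rw [(WithLp.linearEquiv γ ℝ (Fin n → 𝕂)).finrank_eq, Module.finrank_pi_fintype]
  simpa [mul_comm] using Nat.mul_le_mul_left n (RCLike.finrank_le_two 𝕂)

/-- `coeffForm c` as a continuous multilinear form on the normed spaces `ℓ_γ^{n k}`, so that the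
operator-norm estimates on nets apply to it. -/
def lpCoeffForm (γ : ℝ≥0∞) [Fact (1 ≤ γ)] (c : (∀ k, Fin (n k)) → 𝕂) :
    ContinuousMultilinearMap 𝕂 (fun k => PiLp γ fun _ : Fin (n k) => 𝕂) 𝕂 where
  toMultilinearMap := (coeffForm c).compLinearMap fun k => WithLp.linearEquiv γ 𝕂 (Fin (n k) → 𝕂)
  cont := by
    change Continuous fun x : ∀ k, PiLp γ fun _ : Fin (n k) => 𝕂 => coeffForm c fun k => (x k).ofLp
    simp only [coeffForm_apply]
    fun_prop

variable {γ : ℝ≥0∞} [Fact (1 ≤ γ)]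

variable (𝕂 n γ) in
lemma exists_nets_piLp : ∃ S : ∀ k, Finset (PiLp γ fun _ : Fin (n k) => 𝕂),
    (∀ k, ∀ x ∈ S k, ‖x‖ ≤ 1) ∧ ∏ k, (S k).card ≤ 25 ^ ∑ k, n k ∧
      ∀ k, IsCover (1 / 2) (closedBall 0 1) (S k : Set (PiLp γ fun _ : Fin (n k) => 𝕂)) := by
  choose S hball hcard hcover using
    fun k => exists_finset_isCover_half_closedBall (PiLp γ fun _ : Fin (n k) => 𝕂)
  refine ⟨S, hball, ?_, hcover⟩
  calc ∏ k, (S k).card ≤ ∏ k, 25 ^ n k := Finset.prod_le_prod' fun k _ => by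
        refine (hcard k).trans ?_
        calc 5 ^ Module.finrank ℝ (PiLp γ fun _ : Fin (n k) => 𝕂) ≤ 5 ^ (2 * n k) :=
              Nat.pow_le_pow_right (by norm_num) (finrank_real_piLp_le 𝕂 γ (n k))
          _ = 25 ^ n k := pow_mul 5 2 (n k)
    _ = 25 ^ ∑ k, n k := Finset.prod_pow_eq_pow_sum _ _ _

lemma sum_norm_prod_rpow_eq_prod_norm_rpow (hγ : γ ≠ ∞) (x : ∀ k, PiLp γ fun _ : Fin (n k) => 𝕂) :
    ∑ j : ∀ k, Fin (n k), ‖∏ k, x k (j k)‖ ^ γ.toReal = ∏ k, ‖x k‖ ^ γ.toReal := by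
  simp only [norm_prod, ← Real.finsetProd_rpow _ _ fun _ _ => norm_nonneg _]
  rw [← Fintype.prod_sum fun k i => ‖x k i‖ ^ γ.toReal]
  exact Finset.prod_congr rfl fun k _ => sum_norm_rpow_eq_norm_toLp_rpow hγ (x k).ofLp

-- `100 = 4 * 25`: the `4` is a union bound over the two signs of the real and imaginary parts.
lemma log_four_mul_add_div_rpow_le {N M : ℕ} (hN : 0 < N) (hM : 0 < M) (hMN : M ≤ 25 ^ N)
    (r : ℝ) :
    (Real.log (4 * M) + N) / (N : ℝ) ^ r ≤ (Real.log 100 + 1) * (N : ℝ) ^ (1 - r) := by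
  have hfour : 4 * M ≤ 100 ^ N :=
    calc 4 * M ≤ 4 ^ N * 25 ^ N := Nat.mul_le_mul (Nat.le_self_pow hN.ne' 4) hMN
      _ = 100 ^ N := (mul_pow 4 25 N).symm
  have hlog : Real.log (4 * M) ≤ N * Real.log 100 := by
    rw [← Real.log_pow]
    exact Real.log_le_log (by positivity) (by exact_mod_cast hfour)
  have hN' : (0 : ℝ) < N := by exact_mod_cast hN
  rw [Real.rpow_sub hN', Real.rpow_one, ← mul_div_assoc]
  gcongr
  linarith

lemma exists_signs_forall_mem_net_norm_coeffForm_le (hγ : γ ≤ 2) (hn : 0 < ∑ k, n k)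
    (S : ∀ k, Finset (PiLp γ fun _ : Fin (n k) => 𝕂)) (hball : ∀ k, ∀ x ∈ S k, ‖x‖ ≤ 1)
    (hcard : ∏ k, (S k).card ≤ 25 ^ ∑ k, n k) :
    ∃ e : (∀ k, Fin (n k)) → ℤˣ, ∀ x : ∀ k, PiLp γ fun _ : Fin (n k) => 𝕂, (∀ k, x k ∈ S k) →
      ‖lpCoeffForm γ (fun j => ((e j : ℤ) : 𝕂)) x‖ ≤
        2 * (Real.log 100 + 1) * (∑ k, (n k : ℝ)) ^ (1 - (1 / γ).toReal) := by
  have hγ_top : γ ≠ ∞ := ne_top_of_le_ne_top ENNReal.ofNat_ne_top hγ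
  have hγ₁ : 1 ≤ γ.toReal := one_le_toReal Fact.out hγ_top
  have hγ₂ : γ.toReal ≤ 2 := ENNReal.toReal_mono ENNReal.ofNat_ne_top hγ
  let N : ℕ := ∑ k, n k
  let t : ℝ := (N : ℝ) ^ (1 / γ).toReal
  have ht : 0 < t := Real.rpow_pos_of_pos (by exact_mod_cast hn) _
  have ht_pow : t ^ γ.toReal = N := by
    rw [← Real.rpow_mul (by positivity), one_div, ENNReal.toReal_inv,
      inv_mul_cancel₀ (by positivity), Real.rpow_one]
  obtain ⟨e, he⟩ := exists_signs_forall_norm_sum_le hγ₁ hγ₂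
    (fun (s : Fintype.piFinset S) (j : ∀ k, Fin (n k)) => ∏ k, s.1 k (j k))
    (fun s => by
      rw [sum_norm_prod_rpow_eq_prod_norm_rpow hγ_top]
      exact Finset.prod_le_one (fun k _ => by positivity) fun k _ =>
        Real.rpow_le_one (norm_nonneg _) (hball k _ (Fintype.mem_piFinset.1 s.2 k))
          (by positivity)) ht
  refine ⟨e, fun x hx => ?_⟩
  have hxS : x ∈ Fintype.piFinset S := Fintype.mem_piFinset.2 hx
  rw [Fintype.card_coe, ht_pow] at he
  calc ‖lpCoeffForm γ (fun j => ((e j : ℤ) : 𝕂)) x‖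
      = ‖∑ j, ((e j : ℤ) : 𝕂) * ∏ k, x k (j k)‖ := congrArg _ (coeffForm_apply _ _)
    _ ≤ 2 * ((Real.log (4 * (Fintype.piFinset S).card) + N) / t) := he ⟨x, hxS⟩
    _ ≤ 2 * ((Real.log 100 + 1) * (N : ℝ) ^ (1 - (1 / γ).toReal)) := by
        gcongr
        exact log_four_mul_add_div_rpow_le hn (Finset.card_pos.2 ⟨x, hxS⟩)
          ((Fintype.card_piFinset S).trans_le hcard) _
    _ = 2 * (Real.log 100 + 1) * (∑ k, (n k : ℝ)) ^ (1 - (1 / γ).toReal) := by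
        rw [mul_assoc, Nat.cast_sum]

lemma exists_signs_forall_norm_coeffForm_le (hγ : γ ≤ 2) (hn : 0 < ∑ k, n k) :
    ∃ e : (∀ k, Fin (n k)) → ℤˣ, ∀ x : ∀ k, Fin (n k) → 𝕂,
      ‖coeffForm (fun j => ((e j : ℤ) : 𝕂)) x‖ ≤
        2 ^ (m + 1) * (Real.log 100 + 1) * (∑ k, (n k : ℝ)) ^ (1 - (1 / γ).toReal) *
          ∏ k, ‖WithLp.toLp γ (x k)‖ := by
  obtain ⟨S, hball, hcard, hcover⟩ := exists_nets_piLp 𝕂 n γ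
  obtain ⟨e, he⟩ := exists_signs_forall_mem_net_norm_coeffForm_le hγ hn S hball hcard
  refine ⟨e, fun x => ?_⟩
  have hbound := norm_multilinear_le_of_isCover_closedBall (by norm_num) hcover
    (lpCoeffForm γ fun j => ((e j : ℤ) : 𝕂)) he fun k => WithLp.toLp γ (x k)
  refine hbound.trans_eq ?_
  have htwo : (1 - ((1 / 2 : ℝ≥0) : ℝ))⁻¹ = 2 := by norm_num
  rw [Fintype.card_fin, htwo]
  ring

lemma opNorm_coeffForm_le_of_forall_norm_le {c : (∀ k, Fin (n k)) → 𝕂} {K : ℝ} (hK : 0 ≤ K)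
    (hc : ∀ x, ‖coeffForm c x‖ ≤ K * ∏ k, ‖WithLp.toLp γ (x k)‖) {p : Fin m → ℝ≥0∞}
    (hp : ∀ k, 1 ≤ p k) :
    opNorm p (coeffForm c) ≤
      K * ∏ k, (n k : ℝ) ^ max ((1 / γ).toReal - (1 / p k).toReal) 0 := by
  refine Real.sSup_le ?_ (by positivity)
  rintro _ ⟨x, hx, rfl⟩
  refine (hc x).trans ?_
  gcongr with k
  have : Fact (1 ≤ p k) := ⟨hp k⟩
  have hxk := hx k
  rw [lpNorm_eq_norm_toLp] at hxk
  calc ‖WithLp.toLp γ (x k)‖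
      ≤ (n k : ℝ) ^ max ((1 / γ).toReal - (1 / p k).toReal) 0 * ‖WithLp.toLp (p k) (x k)‖ := by
        simpa using norm_toLp_le_card_rpow_mul_norm_toLp (q := γ) (p := p k) (x k)
    _ ≤ (n k : ℝ) ^ max ((1 / γ).toReal - (1 / p k).toReal) 0 :=
        mul_le_of_le_one_right (by positivity) hxk

end KahaneSalemZygmund

theorem ksz_albuquerque_rezende_general {𝕂 : Type*} [RCLike 𝕂] {m : ℕ} {n : Fin m → ℕ}
    (hn : 0 < ∑ k, n k) {γ : ℝ≥0∞} (hγ₁ : 1 ≤ γ) (hγ₂ : γ ≤ 2) :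
    ∃ ε : (∀ k, Fin (n k)) → 𝕂, (∀ j, ε j = 1 ∨ ε j = -1) ∧
      ∀ p : Fin m → ℝ≥0∞, (∀ k, 1 ≤ p k) →
        opNorm p (coeffForm ε) ≤
          2 ^ (m + 1) * (Real.log 100 + 1) * (∑ k, (n k : ℝ)) ^ (1 - (1 / γ).toReal)
            * ∏ k, (n k : ℝ) ^ max ((1 / γ).toReal - (1 / p k).toReal) 0 := by
  have : Fact (1 ≤ γ) := ⟨hγ₁⟩
  obtain ⟨e, he⟩ := exists_signs_forall_norm_coeffForm_le (𝕂 := 𝕂) hγ₂ hn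
  refine ⟨fun j => ((e j : ℤ) : 𝕂), fun j => ?_, fun p hp => ?_⟩
  · rcases Int.units_eq_one_or (e j) with h | h <;> simp [h]
  · exact opNorm_coeffForm_le_of_forall_norm_le (by positivity) he hp

lemma min_two_iSup_mem_Icc {ι : Type*} {p : ι → ℝ≥0∞} [Decidable (∃ k, p k ≤ 2)]
    (hp : ∀ k, 1 ≤ p k) :
    (if ∃ k, p k ≤ 2 then min 2 (⨆ k, ⨆ _ : p k ≤ 2, p k) else 2) ∈ Set.Icc (1 : ℝ≥0∞) 2 := by
  split_ifs with h
  · obtain ⟨k, hk⟩ := h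
    exact ⟨le_min one_le_two ((hp k).trans (le_iSup₂ (f := fun k (_ : p k ≤ 2) => p k) k hk)),
      min_le_left _ _⟩
  · exact ⟨one_le_two, le_rfl⟩

open Classical in
/-- **The Kahane–Salem–Zygmund-type theorem of Albuquerque and Rezende.**
For positive integers `m, n_1, …, n_m` and `p_1, …, p_m ∈ [1,∞]` there are a constant
`C > 0` depending only on `m` and signs `ε_j ∈ {−1,1}` such that the `m`-linear form
`A z = ∑_j ε_j z^{(1)}_{j 1} ⋯ z^{(m)}_{j m}` satisfies
`‖A‖ ≤ C · (∑ k n_k) ^ (1 − 1/γ) · ∏ k n_k ^ max (1/γ − 1/p_k) 0`, where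
`γ = min 2 (max {p_k : p_k ≤ 2})` (and `γ = 2` if no `p_k ≤ 2`). -/
theorem ksz_albuquerque_rezende {𝕂 : Type*} [RCLike 𝕂] (m : ℕ) (hm : 0 < m) :
    ∃ C : ℝ, 0 < C ∧
      ∀ n : Fin m → ℕ, (∀ k, 0 < n k) → ∀ p : Fin m → ℝ≥0∞, (∀ k, 1 ≤ p k) →
        ∀ γ : ℝ≥0∞,
          γ = (if ∃ k, p k ≤ 2 then min 2 (⨆ k, ⨆ _ : p k ≤ 2, p k) else 2) →
            ∃ ε : (∀ k, Fin (n k)) → 𝕂, (∀ j, ε j = 1 ∨ ε j = -1) ∧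
              opNorm p (coeffForm ε) ≤
                C * (∑ k, (n k : ℝ)) ^ ((1 : ℝ) - (1 / γ).toReal)
                  * ∏ k, (n k : ℝ) ^ max ((1 / γ).toReal - (1 / p k).toReal) 0 := by
  refine ⟨2 ^ (m + 1) * (Real.log 100 + 1), by positivity, ?_⟩
  rintro n hn p hp γ rfl
  have hsum : 0 < ∑ k, n k := Finset.sum_pos (fun k _ => hn k) ⟨⟨0, hm⟩, Finset.mem_univ _⟩
  obtain ⟨hγ₁, hγ₂⟩ := min_two_iSup_mem_Icc hp
  obtain ⟨ε, hsigns, hbound⟩ := ksz_albuquerque_rezende_general (𝕂 := 𝕂) hsum hγ₁ hγ₂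
  exact ⟨ε, hsigns, hbound p hp⟩
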